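/- arXiv:1307.0776 — 3 statements merged into one kernel-verified Lean document; each statement's English description precedes it below -/
import Mathlib

section
/- Let D be a real m×K matrix, let ε > 0, and let a₁, …, a_p ∈ ℝ^m. For each i = 1, …, p suppose cᵢ ∈ ℝ^K satisfies ‖D cᵢ − aᵢ‖₂ ≤ ε and cᵢ minimizes the ℓ¹-norm among all vectors c with ‖D c − aᵢ‖₂ ≤ ε. Let w₁, …, w_p ≥ 0 with Σᵢ wᵢ = 1, set a = Σᵢ wᵢ aᵢ, and suppose c⋆ ∈ ℝ^K satisfies ‖D c⋆ − a‖₂ ≤ ε and minimizes the ℓ¹-norm among all vectors c with ‖D c − a‖₂ ≤ ε. Then ‖c⋆‖₁ ≤ max(‖c₁‖₁, …, ‖c_p‖₁). -/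
/-- The ℓ¹-norm of a finitely indexed real vector. -/
def l1norm {ι : Type*} [Fintype ι] (x : ι → ℝ) : ℝ := ∑ i, |x i|

/-- The Euclidean (ℓ²) norm of a finitely indexed real vector. -/
noncomputable def l2norm {ι : Type*} [Fintype ι] (x : ι → ℝ) : ℝ :=
  Real.sqrt (∑ i, x i ^ 2)

/-! The residual `D c - b` is linear in the pair `(c, b)`, so the bound `‖D c - b‖₂ ≤ ε` defines a
convex set of pairs and `∑ i, w i • c i` is feasible for the target `∑ i, w i • a i`. A minimizer
for this target is therefore no larger than the mixed code, whose ℓ¹-norm is at most the largest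
`‖c i‖₁` by convexity. -/

section Quasiconvex

theorem convex_setOf_residual_le {R E F β : Type*} [Semiring R] [PartialOrder R]
    [AddCommMonoid E] [Module R E] [AddCommGroup F] [Module R F] [LE β] {g : F → β}
    (hg : QuasiconvexOn R Set.univ g) (D : E →ₗ[R] F) (ε : β) :
    Convex R {q : E × F | g (D q.1 - q.2) ≤ ε} := by
  have hlevel : Convex R {y | g y ≤ ε} := by
    simpa only [Set.mem_univ, true_and] using hg ε
  exact hlevel.linear_preimage (D ∘ₗ LinearMap.fst R E F - LinearMap.snd R E F)

variable {𝕜 E F β ι : Type*} [Field 𝕜] [LinearOrder 𝕜] [IsStrictOrderedRing 𝕜]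
  [AddCommGroup E] [Module 𝕜 E] [AddCommGroup F] [Module 𝕜 F]
  {s : Finset ι} {w : ι → 𝕜}

theorem quasiconvexOn_map_sum_le_sup' [SemilatticeSup β] {t : Set E} {f : E → β}
    (hf : QuasiconvexOn 𝕜 t f) (hs : s.Nonempty) (hw : ∀ i ∈ s, 0 ≤ w i)
    (hwsum : ∑ i ∈ s, w i = 1) {x : ι → E} (hx : ∀ i ∈ s, x i ∈ t) :
    f (∑ i ∈ s, w i • x i) ≤ s.sup' hs fun i => f (x i) :=
  ((hf _).sum_mem hw hwsum fun i hi =>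
    ⟨hx i hi, Finset.le_sup' (fun i => f (x i)) hi⟩).2

theorem residual_sum_smul_le [LE β] {g : F → β} (hg : QuasiconvexOn 𝕜 Set.univ g)
    (D : E →ₗ[𝕜] F) {ε : β} {a : ι → F} {c : ι → E}
    (hfeas : ∀ i ∈ s, g (D (c i) - a i) ≤ ε) (hw : ∀ i ∈ s, 0 ≤ w i)
    (hwsum : ∑ i ∈ s, w i = 1) :
    g (D (∑ i ∈ s, w i • c i) - ∑ i ∈ s, w i • a i) ≤ ε := by
  have hmem := (convex_setOf_residual_le hg D ε).sum_mem (z := fun i => (c i, a i)) hw hwsum hfeas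
  simpa only [Set.mem_ofPred_eq, Prod.fst_sum, Prod.snd_sum, Prod.smul_fst, Prod.smul_snd]
    using hmem

theorem sparsity_of_mixture_general {γ : Type*} [SemilatticeSup β] [LE γ]
    {f : E → β} (hf : QuasiconvexOn 𝕜 Set.univ f) {g : F → γ} (hg : QuasiconvexOn 𝕜 Set.univ g)
    (D : E →ₗ[𝕜] F) {ε : γ} (hs : s.Nonempty) {a : ι → F} {c : ι → E}
    (hfeas : ∀ i ∈ s, g (D (c i) - a i) ≤ ε) (hw : ∀ i ∈ s, 0 ≤ w i)
    (hwsum : ∑ i ∈ s, w i = 1) {cstar : E}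
    (hmin : ∀ c', g (D c' - ∑ i ∈ s, w i • a i) ≤ ε → f cstar ≤ f c') :
    f cstar ≤ s.sup' hs fun i => f (c i) :=
  calc
    f cstar ≤ f (∑ i ∈ s, w i • c i) := hmin _ (residual_sum_smul_le hg D hfeas hw hwsum)
    _ ≤ s.sup' hs fun i => f (c i) :=
      quasiconvexOn_map_sum_le_sup' hf hs hw hwsum fun _ _ => Set.mem_univ _

end Quasiconvex

section Norms

variable {ι : Type*} [Fintype ι]

theorem convexOn_norm_toLp (p : ENNReal) [Fact (1 ≤ p)] {E : ι → Type*}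
    [∀ i, NormedAddCommGroup (E i)] [∀ i, NormedSpace ℝ (E i)] :
    ConvexOn ℝ Set.univ fun x : ∀ i, E i => ‖WithLp.toLp p x‖ :=
  convexOn_univ_norm.comp_linearMap (WithLp.linearEquiv p ℝ (∀ i, E i)).symm.toLinearMap

theorem l1norm_eq_norm_toLp (x : ι → ℝ) : l1norm x = ‖WithLp.toLp 1 x‖ :=
  (PiLp.norm_eq_of_L1 (WithLp.toLp 1 x)).symm

theorem l2norm_eq_norm_toLp (x : ι → ℝ) : l2norm x = ‖WithLp.toLp 2 x‖ := by
  simp only [l2norm, EuclideanSpace.norm_eq, Real.norm_eq_abs, sq_abs]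

theorem convexOn_l1norm : ConvexOn ℝ Set.univ (l1norm : (ι → ℝ) → ℝ) :=
  (convexOn_norm_toLp 1).congr fun x _ => (l1norm_eq_norm_toLp x).symm

theorem convexOn_l2norm : ConvexOn ℝ Set.univ (l2norm : (ι → ℝ) → ℝ) :=
  (convexOn_norm_toLp 2).congr fun x _ => (l2norm_eq_norm_toLp x).symm

end Norms

/-- **Sparsity of Mixture of Tensors.**
If each `c i` is an ℓ¹-minimizer subject to `‖D c − a i‖₂ ≤ ε`, and `c⋆` is an
ℓ¹-minimizer subject to `‖D c − Σ w i • a i‖₂ ≤ ε` for a convex combination with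
weights `w`, then `‖c⋆‖₁ ≤ max_i ‖c i‖₁`. -/
theorem sparsity_of_mixture {m K p : ℕ} (hp : 0 < p)
    (D : Matrix (Fin m) (Fin K) ℝ) (ε : ℝ) (hε : 0 < ε)
    (a : Fin p → Fin m → ℝ) (c : Fin p → Fin K → ℝ)
    (hfeas : ∀ i, l2norm (D.mulVec (c i) - a i) ≤ ε)
    (hmin : ∀ i, ∀ c' : Fin K → ℝ, l2norm (D.mulVec c' - a i) ≤ ε →
      l1norm (c i) ≤ l1norm c')
    (w : Fin p → ℝ) (hw : ∀ i, 0 ≤ w i) (hwsum : ∑ i, w i = 1)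
    (cstar : Fin K → ℝ)
    (hfeas' : l2norm (D.mulVec cstar - ∑ i, w i • a i) ≤ ε)
    (hmin' : ∀ c' : Fin K → ℝ, l2norm (D.mulVec c' - ∑ i, w i • a i) ≤ ε →
      l1norm cstar ≤ l1norm c') :
    l1norm cstar ≤
      (Finset.univ : Finset (Fin p)).sup'
        (by simp [Finset.univ_nonempty_iff, Fin.pos_iff_nonempty.mp hp])
        (fun i => l1norm (c i)) :=
  sparsity_of_mixture_general convexOn_l1norm.quasiconvexOn convexOn_l2norm.quasiconvexOn
    D.mulVecLin _ (fun i _ => hfeas i) (fun i _ => hw i) hwsum hmin'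
end

section
/- Let τ > 0, d₀ > 0 and set ζ⋆ = (8π²τ d₀)⁻¹. Then for every integer n ≥ 0, ∫₀^∞ exp(−4π²τ d₀ q²) · G_n(q|ζ⋆) · q² dq equals (ζ⋆^{3/2} Γ(3/2) / 2)^{1/2} if n = 0 and equals 0 if n ≥ 1. In particular, at the matched scale ζ⋆ the isotropic Gaussian signal has a one-sparse radial SPF coefficient vector. -/
open Real

/-- The generalized Laguerre polynomial of order `1/2`:
`L_n^{1/2}(x) = Σ_{k=0}^n (−1)^k [Γ(n+3/2)/(Γ(k+3/2)(n−k)! k!)] x^k`. -/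
noncomputable def genLaguerreHalf (n : ℕ) (x : ℝ) : ℝ :=
  ∑ k ∈ Finset.range (n + 1),
    (-1 : ℝ) ^ k *
      (Real.Gamma ((n : ℝ) + 3 / 2) /
        (Real.Gamma ((k : ℝ) + 3 / 2) * (Nat.factorial (n - k)) * (Nat.factorial k))) *
      x ^ k

/-- The SPF radial basis function
`G_n(q|ζ) = [ (2/ζ^{3/2}) · n!/Γ(n+3/2) ]^{1/2} · exp(−q²/(2ζ)) · L_n^{1/2}(q²/ζ)`. -/
noncomputable def spfG (n : ℕ) (q ζ : ℝ) : ℝ :=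
  Real.sqrt (2 / ζ ^ ((3 : ℝ) / 2) * (Nat.factorial n) / Real.Gamma ((n : ℝ) + 3 / 2)) *
    Real.exp (-q ^ 2 / (2 * ζ)) * genLaguerreHalf n (q ^ 2 / ζ)

/-!
At the matched scale the product of the signal with the Gaussian factor of `G_n` is `exp (-q² / ζ)`,
so the substitution `x = q² / ζ` turns the coefficient into a multiple of the integral of
`L_n^{1/2}` against the Laguerre weight `x^{1/2} e^{-x}`. The `k`-th moment of that weight is
`Γ(k + 3/2)`, which cancels the same factor in the denominator of the `k`-th coefficient of
`L_n^{1/2}`; what remains is a multiple of the alternating binomial sum `∑ (-1)^k (n choose k)`.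
-/

open MeasureTheory Set

/-- The coefficient of `x^k` in the generalized Laguerre polynomial `L_n^α`. Two junk values:
for `k > n` it is not zero, since `n - k` truncates to `0`, and if `α` is a negative integer then
`Gamma` takes the value `0` at its poles. -/
noncomputable def genLaguerreCoeff (α : ℝ) (n k : ℕ) : ℝ :=
  (-1) ^ k * (Gamma (n + α + 1) / (Gamma (k + α + 1) * (n - k).factorial * k.factorial))

/-- The generalized Laguerre polynomial `L_n^α` of real order `α`, as a function on `ℝ`, with the
normalization of `genLaguerreHalf`, which is the case `α = 1 / 2`. -/
noncomputable def genLaguerre (α : ℝ) (n : ℕ) (x : ℝ) : ℝ :=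
  ∑ k ∈ Finset.range (n + 1), genLaguerreCoeff α n k * x ^ k

lemma genLaguerreHalf_eq_genLaguerre (n : ℕ) : genLaguerreHalf n = genLaguerre (1 / 2) n := by
  have hhalf (m : ℕ) : (m : ℝ) + 1 / 2 + 1 = m + 3 / 2 := by ring
  funext x
  simp only [genLaguerreHalf, genLaguerre, genLaguerreCoeff, hhalf]

section LaguerreWeight

variable {α : ℝ}

lemma pow_mul_exp_neg_mul_rpow (k : ℕ) {x : ℝ} (hx : 0 < x) :
    x ^ k * (exp (-x) * x ^ α) = exp (-x) * x ^ (k + α + 1 - 1) := by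
  rw [add_sub_cancel_right, rpow_add hx, rpow_natCast, mul_left_comm]

lemma natCast_add_add_one_pos (hα : -1 < α) (k : ℕ) : 0 < k + α + 1 := by
  linarith [k.cast_nonneg (α := ℝ)]

lemma integrableOn_pow_mul_exp_neg_mul_rpow (hα : -1 < α) (k : ℕ) :
    IntegrableOn (fun x : ℝ => x ^ k * (exp (-x) * x ^ α)) (Ioi 0) :=
  (GammaIntegral_convergent (natCast_add_add_one_pos hα k)).congr_fun
    (fun _ hx => (pow_mul_exp_neg_mul_rpow k hx).symm) measurableSet_Ioi

lemma integral_pow_mul_exp_neg_mul_rpow (hα : -1 < α) (k : ℕ) :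
    ∫ x in Ioi (0 : ℝ), x ^ k * (exp (-x) * x ^ α) = Gamma (k + α + 1) := by
  rw [Gamma_eq_integral (natCast_add_add_one_pos hα k)]
  exact setIntegral_congr_fun measurableSet_Ioi fun _ hx => pow_mul_exp_neg_mul_rpow k hx

lemma genLaguerreCoeff_mul_Gamma (hα : -1 < α) {n k : ℕ} (hk : k ≤ n) :
    genLaguerreCoeff α n k * Gamma (k + α + 1) =
      Gamma (n + α + 1) / n.factorial * ((-1) ^ k * n.choose k) := by
  have hΓ : Gamma (k + α + 1) ≠ 0 := (Gamma_pos_of_pos (natCast_add_add_one_pos hα k)).ne'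
  rw [genLaguerreCoeff, Nat.cast_choose ℝ hk]
  field_simp

lemma integral_genLaguerre_mul_exp_neg_mul_rpow (hα : -1 < α) (n : ℕ) :
    ∫ x in Ioi (0 : ℝ), genLaguerre α n x * (exp (-x) * x ^ α) =
      if n = 0 then Gamma (α + 1) else 0 := by
  have halternating : ∑ k ∈ Finset.range (n + 1), (-1 : ℝ) ^ k * n.choose k =
      if n = 0 then 1 else 0 := by
    exact_mod_cast Int.alternating_sum_range_choose (n := n)
  calc ∫ x in Ioi (0 : ℝ), genLaguerre α n x * (exp (-x) * x ^ α)
      = ∑ k ∈ Finset.range (n + 1), genLaguerreCoeff α n k * Gamma (k + α + 1) := by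
        simp only [genLaguerre, Finset.sum_mul, mul_assoc (genLaguerreCoeff α n _)]
        rw [integral_finsetSum _ fun k _ =>
          (integrableOn_pow_mul_exp_neg_mul_rpow hα k).const_mul (genLaguerreCoeff α n k)]
        simp only [integral_const_mul, integral_pow_mul_exp_neg_mul_rpow hα]
    _ = Gamma (n + α + 1) / n.factorial *
          ∑ k ∈ Finset.range (n + 1), (-1 : ℝ) ^ k * n.choose k := by
        rw [Finset.mul_sum]
        exact Finset.sum_congr rfl fun k hk =>
          genLaguerreCoeff_mul_Gamma hα (Finset.mem_range_succ_iff.mp hk)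
    _ = if n = 0 then Gamma (α + 1) else 0 := by
        rw [halternating]
        split_ifs with hn
        · simp [hn]
        · rw [mul_zero]

end LaguerreWeight

lemma integral_rpow_smul_comp_sq_div {E : Type*} [NormedAddCommGroup E] [NormedSpace ℝ E]
    (f : ℝ → E) (α : ℝ) {ζ : ℝ} (hζ : 0 < ζ) :
    ∫ q in Ioi (0 : ℝ), q ^ (2 * α + 1) • f (q ^ 2 / ζ) =
      (ζ ^ (α + 1) / 2) • ∫ x in Ioi (0 : ℝ), x ^ α • f x := by
  have hsq : ∀ q ∈ Ioi (0 : ℝ), q ^ (2 * α + 1) • f (q ^ 2 / ζ) =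
      (ζ ^ α / 2) • (2 * q ^ ((2 : ℝ) - 1)) •
        ((q ^ (2 : ℝ) * ζ⁻¹) ^ α • f (q ^ (2 : ℝ) * ζ⁻¹)) := by
    intro q (hq : 0 < q)
    have hpow : q ^ (2 * α + 1) =
        ζ ^ α / 2 * (2 * q ^ ((2 : ℝ) - 1)) * (q ^ (2 : ℝ) * ζ⁻¹) ^ α := by
      rw [mul_rpow (by positivity) (by positivity), ← rpow_mul hq.le, inv_rpow hζ.le,
        rpow_add hq, show (2 : ℝ) - 1 = 1 by norm_num]
      field_simp
    rw [smul_smul, smul_smul, ← hpow, rpow_two, div_eq_mul_inv]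
  rw [setIntegral_congr_fun measurableSet_Ioi hsq, integral_smul,
    integral_comp_rpow_Ioi_of_pos (g := fun y => (y * ζ⁻¹) ^ α • f (y * ζ⁻¹)) two_pos,
    integral_comp_mul_right_Ioi (fun x => x ^ α • f x) 0 (inv_pos.mpr hζ), zero_mul, inv_inv,
    smul_smul, rpow_add_one hζ.ne', div_mul_eq_mul_div]

lemma integral_genLaguerre_comp_sq_div {α ζ : ℝ} (hα : -1 < α) (hζ : 0 < ζ) (n : ℕ) :
    ∫ q in Ioi (0 : ℝ), q ^ (2 * α + 1) *
        (genLaguerre α n (q ^ 2 / ζ) * exp (-(q ^ 2 / ζ))) =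
      if n = 0 then ζ ^ (α + 1) / 2 * Gamma (α + 1) else 0 := by
  have hsubst := integral_rpow_smul_comp_sq_div (fun x => genLaguerre α n x * exp (-x)) α hζ
  have hweight (x : ℝ) : x ^ α * (genLaguerre α n x * exp (-x)) =
      genLaguerre α n x * (exp (-x) * x ^ α) := by ring
  simp only [smul_eq_mul, hweight] at hsubst
  rw [hsubst, integral_genLaguerre_mul_exp_neg_mul_rpow hα, mul_ite, mul_zero]

lemma exp_neg_sq_div_mul_spfG (n : ℕ) (q ζ : ℝ) :
    exp (-q ^ 2 / (2 * ζ)) * spfG n q ζ =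
      √(2 / ζ ^ ((3 : ℝ) / 2) * n.factorial / Gamma (n + 3 / 2)) *
        (genLaguerre (1 / 2) n (q ^ 2 / ζ) * exp (-(q ^ 2 / ζ))) := by
  have hexp : exp (-(q ^ 2 / ζ)) = exp (-q ^ 2 / (2 * ζ)) * exp (-q ^ 2 / (2 * ζ)) := by
    rw [← exp_add]
    congr 1
    ring
  rw [hexp, spfG, genLaguerreHalf_eq_genLaguerre]
  ring

lemma integral_exp_neg_sq_div_mul_spfG {ζ : ℝ} (hζ : 0 < ζ) (n : ℕ) :
    ∫ q in Ioi (0 : ℝ), exp (-q ^ 2 / (2 * ζ)) * spfG n q ζ * q ^ 2 =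
      if n = 0 then √(ζ ^ ((3 : ℝ) / 2) * Gamma (3 / 2) / 2) else 0 := by
  have hsq (q : ℝ) : q ^ 2 = q ^ (2 * (1 / 2) + 1 : ℝ) := by
    rw [← rpow_two]
    norm_num
  have hintegrand (q : ℝ) : exp (-q ^ 2 / (2 * ζ)) * spfG n q ζ * q ^ 2 =
      √(2 / ζ ^ ((3 : ℝ) / 2) * n.factorial / Gamma (n + 3 / 2)) *
        (q ^ (2 * (1 / 2) + 1 : ℝ) *
          (genLaguerre (1 / 2) n (q ^ 2 / ζ) * exp (-(q ^ 2 / ζ)))) := by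
    rw [exp_neg_sq_div_mul_spfG, ← hsq]
    ring
  simp only [hintegrand]
  rw [integral_const_mul, integral_genLaguerre_comp_sq_div (by norm_num) hζ,
    show (1 / 2 + 1 : ℝ) = 3 / 2 by norm_num]
  split_ifs with hn
  · have hnorm : 2 / ζ ^ ((3 : ℝ) / 2) * (n.factorial : ℝ) / Gamma (n + 3 / 2) =
        (ζ ^ ((3 : ℝ) / 2) * Gamma (3 / 2) / 2)⁻¹ := by
      simp only [hn, Nat.factorial_zero, Nat.cast_one, Nat.cast_zero, zero_add]
      field_simp
    rw [hnorm, sqrt_inv, div_mul_eq_mul_div, inv_mul_eq_div, div_sqrt]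
  · rw [mul_zero]

/-- **Optimal scale (SPF coefficients of the isotropic Gaussian).**
At the matched scale `ζ⋆ = (8π²τd₀)⁻¹`, the radial SPF coefficients of the
isotropic Gaussian signal `q ↦ exp(−4π²τd₀q²)` are one-sparse:
`∫₀^∞ exp(−4π²τd₀q²) Gₙ(q|ζ⋆) q² dq = (ζ⋆^{3/2} Γ(3/2)/2)^{1/2}` if `n = 0`,
and `0` if `n ≥ 1`. -/
theorem spf_coeff_isotropic_gaussian (τ d₀ : ℝ) (hτ : 0 < τ) (hd₀ : 0 < d₀)
    (ζ : ℝ) (hζ : ζ = (8 * π ^ 2 * τ * d₀)⁻¹) (n : ℕ) :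
    (∫ q in Set.Ioi (0 : ℝ),
        Real.exp (-(4 * π ^ 2 * τ * d₀ * q ^ 2)) * spfG n q ζ * q ^ 2) =
      if n = 0 then Real.sqrt (ζ ^ ((3 : ℝ) / 2) * Real.Gamma (3 / 2) / 2) else 0 := by
  have hζ_pos : 0 < ζ := by rw [hζ]; positivity
  have hexponent (q : ℝ) : -(4 * π ^ 2 * τ * d₀ * q ^ 2) = -q ^ 2 / (2 * ζ) := by
    rw [hζ]
    field_simp
    ring
  simp only [hexponent]
  exact integral_exp_neg_sq_div_mul_spfG hζ_pos n
end

section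
/- Let τ > 0, ζ₀ > 0, d₀ > 0, d₁ > 0, and set ζ₁ = ζ₀ d₀ / d₁. Let T be a symmetric positive-definite 3×3 real matrix, let n ≥ 0 be an integer, and let F : ℝ³ \ {0} → ℝ be a bounded measurable function that is homogeneous of degree 0 (F(λ q) = F(q) for all λ > 0 and q ≠ 0). Then ∫_{ℝ³} exp(−4π²τ (d₁/d₀) qᵀ T q) · G_n(‖q‖ | ζ₁) · F(q) dq = (d₀/d₁)^{3/4} · ∫_{ℝ³} exp(−4π²τ qᵀ T q) · G_n(‖q‖ | ζ₀) · F(q) dq. -/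
open Real Matrix

/-!
Put `s = √(d₁/d₀)`. Since `G_n(r|ζ)` depends on `r` only through `r²/ζ`, apart from a normalization
of order `ζ^{-3/4}`, the signal and the radial function at the new scale are both the old ones
precomposed with the dilation `q ↦ s • q`, which leaves `F` unchanged. The normalization gives
`s^{3/2}` and the Jacobian of the dilation `s^{-3}`, whose product is `(d₀/d₁)^{3/4}`.
-/

theorem spfG_div_sq (n : ℕ) (r : ℝ) {ζ s : ℝ} (hζ : 0 < ζ) (hs : 0 < s) :
    spfG n r (ζ / s ^ 2) = s ^ ((3 : ℝ) / 2) * spfG n (s * r) ζ := by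
  have hpow : (ζ / s ^ 2) ^ ((3 : ℝ) / 2) = ζ ^ ((3 : ℝ) / 2) / (s ^ ((3 : ℝ) / 2)) ^ 2 := by
    rw [Real.div_rpow hζ.le (sq_nonneg s), Real.rpow_pow_comm hs.le]
  have hnormalization :
      2 / (ζ / s ^ 2) ^ ((3 : ℝ) / 2) * (Nat.factorial n) / Real.Gamma ((n : ℝ) + 3 / 2) =
        (s ^ ((3 : ℝ) / 2)) ^ 2 *
          (2 / ζ ^ ((3 : ℝ) / 2) * (Nat.factorial n) / Real.Gamma ((n : ℝ) + 3 / 2)) := by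
    rw [hpow, div_div_eq_mul_div]
    ring
  have hexponent : -r ^ 2 / (2 * (ζ / s ^ 2)) = -(s * r) ^ 2 / (2 * ζ) := by
    field_simp
  have hargument : r ^ 2 / (ζ / s ^ 2) = (s * r) ^ 2 / ζ := by
    field_simp
  rw [spfG, spfG, hnormalization, hexponent, hargument, Real.sqrt_mul (by positivity),
    Real.sqrt_sq (by positivity), mul_assoc, mul_assoc, mul_assoc]

section Signal

variable {E : Type*} [AddCommGroup E] [Module ℝ E]

/-- The diffusion signal `E(q) = exp(−4π²τ qᵀTq)` of the single tensor model, the tensor being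
given by its quadratic form `Q(q) = qᵀTq`. -/
noncomputable def tensorSignal (τ : ℝ) (Q : QuadraticForm ℝ E) (q : E) : ℝ :=
  Real.exp (-(4 * π ^ 2 * τ * Q q))

theorem tensorSignal_sqrt_smul (τ : ℝ) (Q : QuadraticForm ℝ E) {c : ℝ} (hc : 0 ≤ c) (q : E) :
    tensorSignal τ Q (√c • q) = tensorSignal τ (c • Q) q := by
  simp only [tensorSignal, QuadraticMap.map_smul, _root_.smul_apply, Real.mul_self_sqrt hc]

/-- The quadratic form `q ↦ qᵀTq` of a tensor `T`, on Euclidean space so that the norm entering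
the radial functions is the Euclidean one. -/
noncomputable def tensorForm {ι : Type*} [Fintype ι] [DecidableEq ι] (T : Matrix ι ι ℝ) :
    QuadraticForm ℝ (EuclideanSpace ℝ ι) :=
  T.toQuadraticForm'.comp (WithLp.linearEquiv 2 ℝ (ι → ℝ)).toLinearMap

theorem tensorForm_apply {ι : Type*} [Fintype ι] [DecidableEq ι] (T : Matrix ι ι ℝ)
    (q : EuclideanSpace ℝ ι) : tensorForm T q = (q : ι → ℝ) ⬝ᵥ T.mulVec q :=
  Matrix.toLinearMap₂'_apply' T _ _

end Signal

section Coefficients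

open MeasureTheory Module

variable {E V : Type*} [NormedAddCommGroup E] [MeasurableSpace E]
  [NormedAddCommGroup V] [NormedSpace ℝ V]

/-- The SPF coefficient at scale `ζ` of a signal `S`, for the radial index `n` and the angular
factor `F`; it is `0` if the integral diverges. Vector values of `F` cover complex spherical
harmonics. -/
noncomputable def spfCoeff (μ : Measure E) (n : ℕ) (ζ : ℝ) (S : E → ℝ) (F : E → V) : V :=
  ∫ q, (S q * spfG n ‖q‖ ζ) • F q ∂μ

variable [NormedSpace ℝ E] [BorelSpace E] [FiniteDimensional ℝ E]
  (μ : Measure E) [μ.IsAddHaarMeasure]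

theorem spfCoeff_comp_smul {ζ s : ℝ} (hζ : 0 < ζ) (hs : 0 < s) (n : ℕ) (S : E → ℝ) {F : E → V}
    (hF : ∀ q, q ≠ 0 → F (s • q) = F q) :
    spfCoeff μ n (ζ / s ^ 2) (fun q => S (s • q)) F =
      s ^ ((3 : ℝ) / 2 - finrank ℝ E) • spfCoeff μ n ζ S F := by
  have hF_smul (q : E) : F (s • q) = F q := by
    rcases eq_or_ne q 0 with rfl | hq
    · rw [smul_zero]
    · exact hF q hq
  have hintegrand (q : E) : (S (s • q) * spfG n ‖q‖ (ζ / s ^ 2)) • F q =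
      s ^ ((3 : ℝ) / 2) • (S (s • q) * spfG n ‖s • q‖ ζ) • F (s • q) := by
    rw [spfG_div_sq n _ hζ hs, hF_smul, norm_smul, Real.norm_of_nonneg hs.le, smul_smul,
      mul_left_comm]
  calc spfCoeff μ n (ζ / s ^ 2) (fun q => S (s • q)) F
      = s ^ ((3 : ℝ) / 2) • ∫ q, (S (s • q) * spfG n ‖s • q‖ ζ) • F (s • q) ∂μ := by
        simp only [spfCoeff, hintegrand, integral_smul]
    _ = s ^ ((3 : ℝ) / 2) • (s ^ finrank ℝ E)⁻¹ • spfCoeff μ n ζ S F := by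
        rw [Measure.integral_comp_smul_of_nonneg μ (fun q => (S q * spfG n ‖q‖ ζ) • F q) s
          (hR := hs.le), spfCoeff]
    _ = s ^ ((3 : ℝ) / 2 - finrank ℝ E) • spfCoeff μ n ζ S F := by
        rw [smul_smul, ← div_eq_mul_inv, Real.rpow_sub_natCast hs.ne']

theorem spf_coeff_rescale_general (τ : ℝ) {ζ₀ d₀ d₁ : ℝ} (hζ₀ : 0 < ζ₀) (hd₀ : 0 < d₀)
    (hd₁ : 0 < d₁) (Q : QuadraticForm ℝ E) (n : ℕ) {F : E → V}
    (hF : ∀ lam : ℝ, 0 < lam → ∀ q, q ≠ 0 → F (lam • q) = F q) :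
    spfCoeff μ n (ζ₀ * d₀ / d₁) (tensorSignal τ ((d₁ / d₀) • Q)) F =
      (d₀ / d₁) ^ ((finrank ℝ E : ℝ) / 2 - 3 / 4) • spfCoeff μ n ζ₀ (tensorSignal τ Q) F := by
  have hratio : 0 < d₁ / d₀ := div_pos hd₁ hd₀
  have hsignal : tensorSignal τ ((d₁ / d₀) • Q) = fun q => tensorSignal τ Q (√(d₁ / d₀) • q) :=
    funext fun q => (tensorSignal_sqrt_smul τ Q hratio.le q).symm
  have hscale : ζ₀ * d₀ / d₁ = ζ₀ / √(d₁ / d₀) ^ 2 := by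
    rw [Real.sq_sqrt hratio.le, div_div_eq_mul_div]
  have hfactor : (d₀ / d₁) ^ ((finrank ℝ E : ℝ) / 2 - 3 / 4) =
      √(d₁ / d₀) ^ ((3 : ℝ) / 2 - finrank ℝ E) := by
    rw [← inv_div, ← Real.rpow_neg_eq_inv_rpow, ← Real.rpow_div_two_eq_sqrt _ hratio.le]
    ring_nf
  rw [hsignal, hscale, hfactor]
  exact spfCoeff_comp_smul μ hζ₀ (Real.sqrt_pos.2 hratio) n _ (hF _ (Real.sqrt_pos.2 hratio))

end Coefficients

/-- **Uniform rescaling of SPF coefficients (core of Theorem 3).**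
For a symmetric positive-definite tensor `T`, a bounded measurable angular factor
`F` homogeneous of degree 0, and `ζ₁ = ζ₀ d₀/d₁`,
`∫ exp(−4π²τ(d₁/d₀)qᵀTq) Gₙ(‖q‖|ζ₁) F(q) dq
  = (d₀/d₁)^{3/4} ∫ exp(−4π²τ qᵀTq) Gₙ(‖q‖|ζ₀) F(q) dq`. -/
theorem spf_coeff_rescale (τ ζ₀ d₀ d₁ : ℝ) (hτ : 0 < τ) (hζ₀ : 0 < ζ₀)
    (hd₀ : 0 < d₀) (hd₁ : 0 < d₁) (ζ₁ : ℝ) (hζ₁ : ζ₁ = ζ₀ * d₀ / d₁)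
    (T : Matrix (Fin 3) (Fin 3) ℝ) (hTsymm : T.IsSymm) (hTpos : T.PosDef)
    (n : ℕ)
    (F : EuclideanSpace ℝ (Fin 3) → ℝ)
    (hFmeas : Measurable F)
    (hFbdd : ∃ C : ℝ, ∀ q : EuclideanSpace ℝ (Fin 3), |F q| ≤ C)
    (hFhom : ∀ (lam : ℝ), 0 < lam → ∀ q : EuclideanSpace ℝ (Fin 3), q ≠ 0 →
      F (lam • q) = F q) :
    (∫ q : EuclideanSpace ℝ (Fin 3),
        Real.exp (-(4 * π ^ 2 * τ * (d₁ / d₀) * ((q : Fin 3 → ℝ) ⬝ᵥ T.mulVec q))) *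
          spfG n ‖q‖ ζ₁ * F q) =
      (d₀ / d₁) ^ ((3 : ℝ) / 4) *
        ∫ q : EuclideanSpace ℝ (Fin 3),
          Real.exp (-(4 * π ^ 2 * τ * ((q : Fin 3 → ℝ) ⬝ᵥ T.mulVec q))) *
            spfG n ‖q‖ ζ₀ * F q := by
  have hexponent : ((3 : ℕ) : ℝ) / 2 - 3 / 4 = 3 / 4 := by norm_num
  simpa only [spfCoeff, tensorSignal, _root_.smul_apply, tensorForm_apply, smul_eq_mul,
    ← mul_assoc, ← hζ₁, finrank_euclideanSpace_fin, hexponent] using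
    spf_coeff_rescale_general MeasureTheory.volume τ hζ₀ hd₀ hd₁ (tensorForm T) n hFhom
end
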